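/- Let d, k, T be positive integers with T ≥ 3 and kT ≤ d, A* ∈ ℝ^{d×d}, and U_t* ∈ ℝ^{d×k} for t = 1,…,T satisfying the task-diversity assumption. Suppose Â ∈ ℝ^{d×d} and Û_1,…,Û_T ∈ ℝ^{d×k} satisfy 𝓛(Â, Û_1,…,Û_T) = 0, where 𝓛 is the Meta-LoRA loss. Then Â = A* and Û_t(Û_t)ᵀ = U_t*(U_t*)ᵀ for every t ∈ {1,…,T}. -/

import Mathlib

open Matrix BigOperators

noncomputable section

/-- Squared Frobenius norm of a real matrix. -/
def frobSq {m n : Type*} [Fintype m] [Fintype n] (M : Matrix m n ℝ) : ℝ :=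
  ∑ i, ∑ j, (M i j) ^ 2

/-!
If the loss vanishes, `C = Â - A*` equals `Uₜ* (Uₜ*)ᵀ - Ûₜ Ûₜᵀ` for every task `t`. Comparing two
tasks moves all the minus signs away: `Uₛ* (Uₛ*)ᵀ + Ûₜ Ûₜᵀ = Uₜ* (Uₜ*)ᵀ + Ûₛ Ûₛᵀ`. The range of
such a sum of positive semidefinite matrices is the sum of the column spaces, so
`Rₛ ⊔ R̂ₜ = Rₜ ⊔ R̂ₛ`, where `R` and `R̂` denote the column spaces. This space contains `Rₛ ⊔ Rₜ`
and its dimension is no larger, hence the two agree and the range of `C` lies in `Rₛ ⊔ Rₜ`. For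
three independent column spaces the three pairwise sums meet only in zero, so `C = 0`.
-/

theorem frobSq_nonneg {m n : Type*} [Fintype m] [Fintype n] (M : Matrix m n ℝ) : 0 ≤ frobSq M :=
  Finset.sum_nonneg fun _ _ => Finset.sum_nonneg fun _ _ => sq_nonneg _

theorem frobSq_eq_zero_iff {m n : Type*} [Fintype m] [Fintype n] {M : Matrix m n ℝ} :
    frobSq M = 0 ↔ M = 0 := by
  simp [frobSq, Finset.sum_eq_zero_iff_of_nonneg, Finset.sum_nonneg, sq_nonneg, ← Matrix.ext_iff]

theorem iSupIndep_inf_pairwise_sup_eq_bot {ι α : Type*} [CompleteLattice α] [IsModularLattice α]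
    {t : ι → α} (ht : iSupIndep t) {i j l : ι} (hij : i ≠ j) (hil : i ≠ l) (hjl : j ≠ l) :
    (t i ⊔ t j) ⊓ (t i ⊔ t l) ⊓ (t j ⊔ t l) = ⊥ := by
  have disjoint_sup {a b c : ι} (hab : a ≠ b) (hac : a ≠ c) : Disjoint (t a) (t b ⊔ t c) := by
    rw [← iSup_pair]
    exact ht.disjoint_biSup (by simp [hab, hac])
  calc (t i ⊔ t j) ⊓ (t i ⊔ t l) ⊓ (t j ⊔ t l)
      = (t i ⊔ t j ⊓ (t i ⊔ t l)) ⊓ (t j ⊔ t l) := by rw [sup_inf_assoc_of_le _ le_sup_left]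
    _ = t i ⊓ (t j ⊔ t l) := by rw [(disjoint_sup hij.symm hjl).eq_bot, sup_bot_eq]
    _ = ⊥ := (disjoint_sup hij hil).eq_bot

theorem iSupIndep_span_range_of_linearIndependent {ι κ R M : Type*} [Semiring R] [AddCommMonoid M]
    [Module R M] {v : ι → κ → M} (hv : LinearIndependent R fun p : ι × κ => v p.1 p.2) :
    iSupIndep fun i => Submodule.span R (Set.range (v i)) := by
  intro i
  have span_range_le (s : Set ι) {a : ι} (ha : a ∈ s) : Submodule.span R (Set.range (v a)) ≤
      Submodule.span R ((fun p : ι × κ => v p.1 p.2) '' {p | p.1 ∈ s}) :=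
    Submodule.span_mono (Set.range_subset_iff.2 fun j => ⟨(a, j), ha, rfl⟩)
  have hdisj : Disjoint {p : ι × κ | p.1 ∈ ({i} : Set ι)} {p | p.1 ∈ ({i}ᶜ : Set ι)} :=
    disjoint_compl_right.preimage Prod.fst
  exact (hv.disjoint_span_image hdisj).mono (span_range_le {i} rfl)
    (iSup₂_le fun _ hj => span_range_le {i}ᶜ hj)

theorem le_sup_of_sup_eq_sup_of_finrank_le {K V : Type*} [DivisionRing K] [AddCommGroup V]
    [Module K V] [FiniteDimensional K V] {S₁ S₂ T₁ T₂ : Submodule K V} (h : S₁ ⊔ T₂ = S₂ ⊔ T₁)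
    (hS : Disjoint S₁ S₂) (hrank : Module.finrank K T₂ ≤ Module.finrank K S₂) :
    T₁ ≤ S₁ ⊔ S₂ := by
  have hle : S₁ ⊔ S₂ ≤ S₁ ⊔ T₂ := sup_le le_sup_left (h ▸ le_sup_left)
  have hfinrank : Module.finrank K ↥(S₁ ⊔ T₂) ≤ Module.finrank K ↥(S₁ ⊔ S₂) :=
    calc Module.finrank K ↥(S₁ ⊔ T₂)
        ≤ Module.finrank K S₁ + Module.finrank K T₂ :=
          Submodule.finrank_add_le_finrank_add_finrank _ _
      _ ≤ Module.finrank K S₁ + Module.finrank K S₂ := by gcongr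
      _ = Module.finrank K ↥(S₁ ⊔ S₂) := by
        rw [← Submodule.finrank_sup_add_finrank_inf_eq, hS.eq_bot, finrank_bot, add_zero]
  rw [Submodule.eq_of_le_of_finrank_le hle hfinrank, h]
  exact le_sup_right

section ColumnSpace

variable {m n p : Type*} [Fintype n] [Fintype p]

theorem linearIndependent_col_of_rank_eq_card {K : Type*} [Field K] {A : Matrix m n K}
    (hA : A.rank = Fintype.card n) : LinearIndependent K A.col := by
  rw [linearIndependent_iff_card_eq_finrank_span, Set.finrank, ← rank_eq_finrank_span_cols, hA]

theorem rank_eq_card_of_linearIndependent_col {R : Type*} [CommRing R] [Nontrivial R]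
    {A : Matrix m n R} (hA : LinearIndependent R A.col) : A.rank = Fintype.card n := by
  rw [rank_eq_finrank_span_cols, finrank_span_eq_card hA]

theorem range_mulVecLin_fromCols {R : Type*} [CommSemiring R] (A : Matrix m n R)
    (B : Matrix m p R) :
    LinearMap.range (fromCols A B).mulVecLin =
      LinearMap.range A.mulVecLin ⊔ LinearMap.range B.mulVecLin := by
  have hcols : Set.range (fromCols A B).col = Set.range A.col ∪ Set.range B.col :=
    Set.Sum.elim_range A.col B.col ▸ congrArg Set.range (by ext (j | j) <;> rfl)
  simp only [range_mulVecLin, hcols, Submodule.span_union]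

variable [Fintype m] {R : Type*} [Field R] [LinearOrder R] [IsStrictOrderedRing R]

theorem range_mulVecLin_self_mul_transpose (A : Matrix m n R) :
    LinearMap.range (A * Aᵀ).mulVecLin = LinearMap.range A.mulVecLin :=
  Submodule.eq_of_le_of_finrank_eq (mulVecLin_mul A Aᵀ ▸ LinearMap.range_comp_le_range _ _)
    (rank_self_mul_transpose A)

theorem range_mulVecLin_self_mul_transpose_add (A : Matrix m n R) (B : Matrix m p R) :
    LinearMap.range (A * Aᵀ + B * Bᵀ).mulVecLin =
      LinearMap.range A.mulVecLin ⊔ LinearMap.range B.mulVecLin := by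
  rw [← fromCols_mul_fromRows, ← transpose_fromCols, range_mulVecLin_self_mul_transpose,
    range_mulVecLin_fromCols]

theorem range_mulVecLin_self_mul_transpose_sub_le_sup {U₁ U₂ : Matrix m n R} {V₁ V₂ : Matrix m p R}
    (h : U₁ * U₁ᵀ - V₁ * V₁ᵀ = U₂ * U₂ᵀ - V₂ * V₂ᵀ)
    (hdisj : Disjoint (LinearMap.range U₁.mulVecLin) (LinearMap.range U₂.mulVecLin))
    (hrank : V₂.rank ≤ U₂.rank) :
    LinearMap.range (U₁ * U₁ᵀ - V₁ * V₁ᵀ).mulVecLin ≤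
      LinearMap.range U₁.mulVecLin ⊔ LinearMap.range U₂.mulVecLin := by
  have hsup : LinearMap.range U₁.mulVecLin ⊔ LinearMap.range V₂.mulVecLin =
      LinearMap.range U₂.mulVecLin ⊔ LinearMap.range V₁.mulVecLin := by
    rw [← range_mulVecLin_self_mul_transpose_add, ← range_mulVecLin_self_mul_transpose_add,
      sub_eq_sub_iff_add_eq_add.1 h]
  have hV₁ := le_sup_of_sup_eq_sup_of_finrank_le hsup hdisj hrank
  rintro _ ⟨x, rfl⟩
  rw [mulVecLin_apply, sub_mulVec, ← mulVec_mulVec, ← mulVec_mulVec]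
  exact sub_mem (Submodule.mem_sup_left ⟨_, rfl⟩) (hV₁ ⟨_, rfl⟩)

end ColumnSpace

theorem eq_zero_of_forall_self_mul_transpose_sub_eq {m n p R : Type*} [Finite m] [Fintype n]
    [Fintype p] [Field R] [LinearOrder R] [IsStrictOrderedRing R] {U : Fin 3 → Matrix m n R}
    {V : Fin 3 → Matrix m p R} {C : Matrix m m R}
    (hindep : iSupIndep fun i => LinearMap.range (U i).mulVecLin)
    (hrank : ∀ i, (V i).rank ≤ (U i).rank) (hC : ∀ i, U i * (U i)ᵀ - V i * (V i)ᵀ = C) :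
    C = 0 := by
  have := Fintype.ofFinite m
  have range_le {i j : Fin 3} (hij : i ≠ j) : LinearMap.range C.mulVecLin ≤
      LinearMap.range (U i).mulVecLin ⊔ LinearMap.range (U j).mulVecLin :=
    hC i ▸ range_mulVecLin_self_mul_transpose_sub_le_sup ((hC i).trans (hC j).symm)
      (hindep.pairwiseDisjoint hij) (hrank j)
  have hrange : LinearMap.range C.mulVecLin = ⊥ := by
    rw [← le_bot_iff, ← iSupIndep_inf_pairwise_sup_eq_bot hindep (i := 0) (j := 1) (l := 2)
      (by decide) (by decide) (by decide)]
    exact le_inf (le_inf (range_le (by decide)) (range_le (by decide))) (range_le (by decide))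
  classical exact toLin'.map_eq_zero_iff.1 (LinearMap.range_eq_bot.1 hrange)

theorem metaLoRA_exact_recovery_general {τ m κ : Type*} [Fintype τ] [Fintype m] [Fintype κ]
    (Astar : Matrix m m ℝ) (Ustar : τ → Matrix m κ ℝ) (e : Fin 3 → τ)
    (hdiv : LinearIndependent ℝ fun p : Fin 3 × κ => (Ustar (e p.1)).col p.2)
    (Ahat : Matrix m m ℝ) (Uhat : τ → Matrix m κ ℝ)
    (hloss : (1 / 2) * ∑ t, frobSq
        (Astar + Ustar t * (Ustar t)ᵀ - Ahat - Uhat t * (Uhat t)ᵀ) = 0) :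
    Ahat = Astar ∧ ∀ t, Uhat t * (Uhat t)ᵀ = Ustar t * (Ustar t)ᵀ := by
  have hfit (t : τ) : Ustar t * (Ustar t)ᵀ - Uhat t * (Uhat t)ᵀ = Ahat - Astar := by
    have hsum := (mul_eq_zero.1 hloss).resolve_left (by norm_num)
    rw [Finset.sum_eq_zero_iff_of_nonneg fun t _ => frobSq_nonneg _] at hsum
    rw [← sub_eq_zero, ← frobSq_eq_zero_iff.1 (hsum t (Finset.mem_univ t))]
    abel
  have hindep : iSupIndep fun i => LinearMap.range (Ustar (e i)).mulVecLin := by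
    simpa only [range_mulVecLin] using
      iSupIndep_span_range_of_linearIndependent (v := fun i => (Ustar (e i)).col) hdiv
  have hrank (i : Fin 3) : (Uhat (e i)).rank ≤ (Ustar (e i)).rank := by
    rw [rank_eq_card_of_linearIndependent_col (hdiv.comp (Prod.mk i) (Prod.mk_right_injective i))]
    exact rank_le_card_width _
  have hA : Ahat - Astar = 0 :=
    eq_zero_of_forall_self_mul_transpose_sub_eq hindep hrank fun i => hfit (e i)
  exact ⟨sub_eq_zero.1 hA, fun t => (sub_eq_zero.1 ((hfit t).trans hA)).symm⟩

/-- Theorem 3: with `T ≥ 3` tasks and task diversity, any zero of the Meta-LoRA loss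
recovers the ground truth: `Â = A*` and `Ûₜ Ûₜᵀ = Uₜ* (Uₜ*)ᵀ` for all `t`. -/
theorem metaLoRA_exact_recovery
    (d k T : ℕ) (hd : 0 < d) (hk : 0 < k) (hT : 3 ≤ T) (hkT : k * T ≤ d)
    (Astar : Matrix (Fin d) (Fin d) ℝ)
    (Ustar : Fin T → Matrix (Fin d) (Fin k) ℝ)
    (hdiv : (Matrix.of fun i (p : Fin T × Fin k) => Ustar p.1 i p.2).rank = k * T)
    (Ahat : Matrix (Fin d) (Fin d) ℝ)
    (Uhat : Fin T → Matrix (Fin d) (Fin k) ℝ)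
    (hloss : (1 / 2) * ∑ t, frobSq
        (Astar + Ustar t * (Ustar t)ᵀ - Ahat - Uhat t * (Uhat t)ᵀ) = 0) :
    Ahat = Astar ∧ ∀ t : Fin T, Uhat t * (Uhat t)ᵀ = Ustar t * (Ustar t)ᵀ := by
  have hcols := linearIndependent_col_of_rank_eq_card (hdiv.trans (by simp [mul_comm]))
  exact metaLoRA_exact_recovery_general Astar Ustar (Fin.castLE hT)
    (hcols.comp _ ((Fin.castLE_injective hT).prodMap Function.injective_id)) Ahat Uhat hloss
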